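/- arXiv:1508.05789 — 2 statements merged into one kernel-verified Lean document; each statement's English description precedes it below -/
import Mathlib

section
/- Let n ≥ 1, let d : Fin n → ℝ, and let v : Δₙ → ℝⁿ be a continuous function on the standard simplex Δₙ = {λ ∈ ℝⁿ : λᵢ ≥ 0, Σλᵢ = 1}. Suppose {1,…,n} is partitioned into sets K₁ and K₂ (either possibly empty) such that: (i) for all λ ∈ Δₙ, Σᵢ λᵢ vᵢ(λ) = Σᵢ λᵢ dᵢ; (ii) for all k ∈ K₁ and all λ ∈ Δₙ with λₖ = 0, one has vₖ(λ) < dₖ; (iii) for all k ∈ K₂ and all λ ∈ Δₙ, one has vₖ(λ) ≤ dₖ. Then there exists λ* ∈ Δₙ with v(λ*) = d. -/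
/-!
Let `w = v - d`. Since `∑ i, l i * w l i = 0`, at every point `l` of the simplex some `i` with
`l i ≠ 0` has `0 ≤ w l i`, so the closed sets `{l | 0 ≤ w l i}` satisfy the covering condition of
the Knaster–Kuratowski–Mazurkiewicz lemma and have a common point `l`. There every `l i * w l i` is
nonnegative, hence zero, so `w l i = 0` wherever `l i ≠ 0`, and elsewhere `w l i ≤ 0` by assumption.

The Knaster–Kuratowski–Mazurkiewicz lemma is proved without triangulations, by Scarf's parity
argument. Each index ranks finitely many points. A set of points is undominated if no point beats
some element of it in every ranking. Undominated sets with one element fewer than there are indices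
extend in exactly two ways to undominated sets with one more element, apart from the boundary ones,
made of slack points, which extend in exactly one way; so counting as in Sperner's lemma applies.
-/

open Finset

section Undominated

variable {ι T α : Type*} [LinearOrder α] {r : ι → T → α} {s t : Finset T} {k l : ι} {x y : T}

/-- A finite set `s` is undominated for a family of rankings `r` if no point beats, in every
ranking, some element of `s`. These sets play the role of the simplices of a triangulation. -/
def Undominated (r : ι → T → α) (s : Finset T) : Prop :=
  ∀ y, ∃ i, ∀ x ∈ s, r i y ≤ r i x

/-- The points that beat some element of `s` in every ranking except possibly the `k`-th. The best
of them for the `k`-th ranking is what extends an undominated set to a larger one. -/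
def aboveExcept (r : ι → T → α) (s : Finset T) (k : ι) : Set T :=
  {y | ∀ i ≠ k, ∃ x ∈ s, r i x < r i y}

lemma aboveExcept_mono (h : s ⊆ t) : aboveExcept r s k ⊆ aboveExcept r t k := fun y hy i hi => by
  obtain ⟨x, hx, hxy⟩ := hy i hi
  exact ⟨x, h hx, hxy⟩

namespace Undominated

lemma mono (ht : Undominated r t) (h : s ⊆ t) : Undominated r s := fun y => by
  obtain ⟨i, hi⟩ := ht y
  exact ⟨i, fun x hx => hi x (h hx)⟩

lemma le_of_mem_aboveExcept (hs : Undominated r s) (hy : y ∈ aboveExcept r s k) (hx : x ∈ s) :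
    r k y ≤ r k x := by
  obtain ⟨i, hi⟩ := hs y
  obtain rfl : i = k := by
    by_contra hik
    obtain ⟨z, hz, hzy⟩ := hy i hik
    exact (hi z hz).not_gt hzy
  exact hi x hx

lemma disjoint_aboveExcept (hs : Undominated r s) (hkl : k ≠ l) :
    Disjoint (aboveExcept r s k) (aboveExcept r s l) :=
  Set.disjoint_left.2 fun y hk hl => by
    obtain ⟨x, hx, hxy⟩ := hl k hkl
    exact (hs.le_of_mem_aboveExcept hk hx).not_gt hxy

lemma insert_of_isMaxOn [DecidableEq T] (hs : Undominated r s) (hx : x ∈ aboveExcept r s k)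
    (hmax : IsMaxOn (r k) (aboveExcept r s k) x) : Undominated r (insert x s) := fun y => by
  by_contra! hy
  have hyk : y ∈ aboveExcept r s k := fun i hi => by
    obtain ⟨z, hz, hzy⟩ := hy i
    rcases mem_insert.1 hz with rfl | hz
    · obtain ⟨w, hw, hwz⟩ := hx i hi
      exact ⟨w, hw, hwz.trans hzy⟩
    · exact ⟨z, hz, hzy⟩
  obtain ⟨z, hz, hzy⟩ := hy k
  rcases mem_insert.1 hz with rfl | hz
  · exact (hmax hyk).not_gt hzy
  · exact (hs.le_of_mem_aboveExcept hyk hz).not_gt hzy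

variable [Fintype ι] [DecidableEq T]

lemma exists_image_argmin_eq (hs : Undominated r s) (hr : ∀ i, Function.Injective (r i))
    (hne : s.Nonempty) : ∃ μ : ι → T, univ.image μ = s ∧ ∀ i, ∀ x ∈ s, r i (μ i) ≤ r i x := by
  choose μ hμs hμ using fun i => s.exists_min_image (r i) hne
  refine ⟨μ, Subset.antisymm (image_subset_iff.2 fun i _ => hμs i) fun x hx => ?_, hμ⟩
  obtain ⟨i, hi⟩ := hs x
  exact mem_image.2 ⟨i, mem_univ i, hr i ((hμ i x hx).antisymm (hi _ (hμs i)))⟩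

lemma exists_isMaxOn_of_insert (h : Undominated r (insert x s))
    (hr : ∀ i, Function.Injective (r i)) (hcard : #s + 1 = Fintype.card ι) (hx : x ∉ s) :
    ∃ k, x ∈ aboveExcept r s k ∧ IsMaxOn (r k) (aboveExcept r s k) x := by
  obtain ⟨μ, hμs, hμ⟩ := h.exists_image_argmin_eq hr (insert_nonempty x s)
  have hinj : Function.Injective μ := by
    rw [← Set.injOn_univ, ← coe_univ, ← card_image_iff, hμs, card_insert_of_notMem hx, hcard,
      card_univ]
  obtain ⟨k, -, rfl⟩ := mem_image.1 (hμs.symm ▸ mem_insert_self x s)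
  refine ⟨k, fun i hi => ?_, fun y hy =>
    h.le_of_mem_aboveExcept (aboveExcept_mono (subset_insert _ s) hy) (mem_insert_self _ s)⟩
  have hne : μ i ≠ μ k := hinj.ne hi
  exact ⟨μ i, mem_of_mem_insert_of_ne (hμs ▸ mem_image_of_mem μ (mem_univ i)) hne,
    (hμ i _ (mem_insert_self _ s)).lt_of_ne ((hr i).ne hne)⟩

lemma notMem_iff_image_erase_argmin_eq [DecidableEq ι] (hs : Undominated r s)
    (hr : ∀ i, Function.Injective (r i)) {μ : ι → T} (hμs : univ.image μ = s)
    (hμ : ∀ i, ∀ x ∈ s, r i (μ i) ≤ r i x) (hx : x ∈ aboveExcept r s k)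
    (hmax : IsMaxOn (r k) (aboveExcept r s k) x) :
    x ∉ s ↔ (univ.erase k).image μ = s := by
  have hmem : ∀ i, μ i ∈ s := fun i => hμs ▸ mem_image_of_mem μ (mem_univ i)
  constructor
  · intro hxs
    by_contra himage
    have hk : μ k ∉ (univ.erase k).image μ := fun hk =>
      himage (by rw [← hμs, ← insert_erase (mem_univ k), image_insert, erase_insert_eq_erase,
        erase_idem, insert_eq_of_mem hk])
    have hμk : μ k ∈ aboveExcept r s k := fun i hi => by
      have hne : μ i ≠ μ k := fun h => hk (h ▸ mem_image_of_mem μ (mem_erase.2 ⟨hi, mem_univ i⟩))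
      exact ⟨μ i, hmem i, (hμ i _ (hmem k)).lt_of_ne ((hr i).ne hne)⟩
    exact hxs (hr k ((hmax hμk).antisymm (hs.le_of_mem_aboveExcept hx (hmem k))) ▸ hmem k)
  · intro himage hxs
    obtain ⟨i, hi, rfl⟩ := mem_image.1 (himage.symm ▸ hxs)
    obtain ⟨y, hy, hyx⟩ := hx i (ne_of_mem_erase hi)
    exact (hμ i y hy).not_gt hyx

end Undominated

lemma card_filter_image_erase_eq_image_eq_two {A B : Type*} [DecidableEq A] [DecidableEq B]
    {f : A → B} {s : Finset A} (h : #(s.image f) + 1 = #s) :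
    #{x ∈ s | (s.erase x).image f = s.image f} = 2 := by
  obtain ⟨a, ha, b, hb, hab, hfab⟩ := exists_ne_map_eq_of_card_lt_of_maps_to
    (by lia : #(s.image f) < #s) fun x hx => mem_image_of_mem f hx
  have image_erase : ∀ x ∈ s, ∀ y ∈ s, x ≠ y → f x = f y → (s.erase x).image f = s.image f :=
    fun x hx y hy hxy hfxy => by
      rw [← insert_erase hx, image_insert, erase_insert_eq_erase, erase_idem, hfxy, insert_eq_of_mem
        (mem_image_of_mem f (mem_erase.2 ⟨hxy.symm, hy⟩))]
  suffices {x ∈ s | (s.erase x).image f = s.image f} = {a, b} by rw [this, card_pair hab]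
  ext x
  simp only [mem_filter, mem_insert, mem_singleton]
  constructor
  · rintro ⟨hx, himage⟩
    by_contra! ⟨hxa, hxb⟩
    have hinj : Set.InjOn f (s.erase x) := by
      rw [← card_image_iff, himage, card_erase_of_mem hx]
      lia
    exact hab (hinj (mem_erase.2 ⟨hxa.symm, ha⟩) (mem_erase.2 ⟨hxb.symm, hb⟩) hfab)
  · rintro (rfl | rfl)
    · exact ⟨ha, image_erase x ha b hb hab hfab⟩
    · exact ⟨hb, image_erase x hb a ha hab.symm hfab.symm⟩

/-- The points whose addition turns `s` into a larger undominated set. -/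
def extensions (r : ι → T → α) (s : Finset T) [DecidableEq T] : Set T :=
  {x | x ∉ s ∧ Undominated r (insert x s)}

lemma Undominated.ncard_extensions_eq_two [Fintype ι] [Finite T] [DecidableEq T]
    (hs : Undominated r s) (hr : ∀ i, Function.Injective (r i))
    (hcard : #s + 1 = Fintype.card ι) (hne : s.Nonempty)
    (habove : ∀ k, (aboveExcept r s k).Nonempty) : (extensions r s).ncard = 2 := by
  classical
  obtain ⟨μ, hμs, hμ⟩ := hs.exists_image_argmin_eq hr hne
  choose g hg hmax using fun k => Set.exists_max_image _ (r k) (Set.toFinite _) (habove k)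
  have hgs : ∀ k, g k ∉ s ↔ (univ.erase k).image μ = s := fun k =>
    hs.notMem_iff_image_erase_argmin_eq hr hμs hμ (hg k) (hmax k)
  have hext : extensions r s = ↑(({k | (univ.erase k).image μ = s} : Finset ι).image g) := by
    ext x
    simp only [extensions, Set.mem_ofPred_eq, coe_image, coe_filter, mem_univ, true_and,
      Set.mem_image, ← hgs]
    constructor
    · rintro ⟨hx, hu⟩
      obtain ⟨k, hxk, hxmax⟩ := hu.exists_isMaxOn_of_insert hr hcard hx
      obtain rfl : g k = x := hr k ((hxmax (hg k)).antisymm (hmax k x hxk))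
      exact ⟨k, hx, rfl⟩
    · rintro ⟨k, hk, rfl⟩
      exact ⟨hk, hs.insert_of_isMaxOn (hg k) (hmax k)⟩
  have hinj : Function.Injective g := fun k l hkl => by
    by_contra hne
    exact Set.disjoint_left.1 (hs.disjoint_aboveExcept hne) (hg k) (hkl ▸ hg l)
  rw [hext, Set.ncard_coe_finset, card_image_of_injective _ hinj]
  simp_rw [← hμs]
  exact card_filter_image_erase_eq_image_eq_two (by rw [hμs, hcard, card_univ])

end Undominated

section Slack

variable {ι T α : Type*} [LinearOrder α] {r : ι → T → α} {e : ι → T}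

/-- The points `e i` are slack points for the rankings `r`: the `i`-th one is the worst point of the
`i`-th ranking, and in the other rankings it is better than all points that are not slack points.
They stand for the boundary facets of a triangulated simplex. -/
structure IsSlack (r : ι → T → α) (e : ι → T) : Prop where
  le : ∀ i y, r i (e i) ≤ r i y
  lt : ∀ i j y, i ≠ j → y ∉ Set.range e → r i y < r i (e j)

variable [Fintype ι] [DecidableEq T]

namespace IsSlack

lemma ncard_extensions_eq_two [Finite T] (he : IsSlack r e)
    (hr : ∀ i, Function.Injective (r i)) {s : Finset T} (hs : Undominated r s)
    (hcard : #s + 1 = Fintype.card ι) {x : T} (hx : x ∈ s) (hxe : x ∉ Set.range e) :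
    (extensions r s).ncard = 2 :=
  hs.ncard_extensions_eq_two hr hcard ⟨x, hx⟩ fun k =>
    ⟨e k, fun i hi => ⟨x, hx, he.lt i k x hi hxe⟩⟩

variable [DecidableEq ι]

lemma undominated_image_erase (he : IsSlack r e) (a : ι) :
    Undominated r ((univ.erase a).image e) := fun y => by
  by_cases hy : y ∈ Set.range e
  · obtain ⟨i, rfl⟩ := hy
    exact ⟨i, fun x _ => he.le i x⟩
  · refine ⟨a, fun x hx => ?_⟩
    obtain ⟨j, hj, rfl⟩ := mem_image.1 hx
    exact (he.lt a j y (ne_of_mem_erase hj).symm hy).le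

lemma mem_aboveExcept_image_erase (he : IsSlack r e) (hr : ∀ i, Function.Injective (r i)) {a : ι}
    {y : T} (hy : y ∉ (univ.erase a).image e) : y ∈ aboveExcept r ((univ.erase a).image e) a :=
  fun i hi => by
    have hmem : e i ∈ (univ.erase a).image e := mem_image_of_mem e (mem_erase.2 ⟨hi, mem_univ i⟩)
    exact ⟨e i, hmem, (he.le i y).lt_of_ne ((hr i).ne (ne_of_mem_of_not_mem hmem hy))⟩

lemma eq_of_mem_aboveExcept_image_erase (he : IsSlack r e) {a k : ι} {x : T}
    (hx : x ∉ (univ.erase a).image e) (hk : x ∈ aboveExcept r ((univ.erase a).image e) k) :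
    k = a := by
  by_contra hka
  obtain ⟨z, hz, hzx⟩ := hk a (Ne.symm hka)
  obtain ⟨j, hj, rfl⟩ := mem_image.1 hz
  have hxe : x ∈ Set.range e := by
    by_contra hxe
    exact hzx.not_gt (he.lt a j x (ne_of_mem_erase hj).symm hxe)
  obtain ⟨i, rfl⟩ := hxe
  obtain rfl : i = a := by
    by_contra hia
    exact hx (mem_image_of_mem e (mem_erase.2 ⟨hia, mem_univ i⟩))
  exact hzx.not_ge (he.le i _)

lemma ncard_extensions_image_erase [Finite T] (he : IsSlack r e)
    (hr : ∀ i, Function.Injective (r i)) (hinj : Function.Injective e) (a : ι) :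
    (extensions r ((univ.erase a).image e)).ncard = 1 := by
  set s := (univ.erase a).image e with hs
  have hcard : #s + 1 = Fintype.card ι := by
    rw [hs, card_image_of_injective _ hinj, card_erase_add_one (mem_univ a), card_univ]
  have hmem : ∀ y ∉ s, y ∈ aboveExcept r s a := fun y hy => he.mem_aboveExcept_image_erase hr hy
  have hea : e a ∉ s := by simp [hs, hinj.eq_iff]
  obtain ⟨g, hg, hmax⟩ := Set.exists_max_image {y | y ∉ s} (r a) (Set.toFinite _) ⟨e a, hea⟩
  refine Set.ncard_eq_one.2 ⟨g, Set.eq_singleton_iff_unique_mem.2 ⟨⟨hg, ?_⟩, ?_⟩⟩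
  · refine (he.undominated_image_erase a).insert_of_isMaxOn (hmem g hg) fun y hy => hmax y ?_
    intro hys
    obtain ⟨j, hj, rfl⟩ := mem_image.1 hys
    obtain ⟨x, -, hx⟩ := hy j (ne_of_mem_erase hj)
    exact (he.le j x).not_gt hx
  · rintro x ⟨hx, hu⟩
    obtain ⟨k, hxk, hxmax⟩ := hu.exists_isMaxOn_of_insert hr hcard hx
    obtain rfl := he.eq_of_mem_aboveExcept_image_erase hx hxk
    exact hr k ((hmax x hx).antisymm (hxmax (hmem g hg)))

end IsSlack

variable [DecidableEq ι]

lemma even_card_filter_image_erase {c : T → ι} {t : Finset T} (ht : #t = Fintype.card ι)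
    (hc : t.image c ≠ univ) (a : ι) : Even #{x ∈ t | (t.erase x).image c = univ.erase a} := by
  by_cases hta : t.image c = univ.erase a
  · rw [← hta, card_filter_image_erase_eq_image_eq_two]
    · exact even_two
    · rw [hta, card_erase_add_one (mem_univ a), card_univ, ht]
  · rw [filter_false_of_mem, card_empty]
    · exact Even.zero
    · intro x hx hxa
      have himage : t.image c = insert (c x) (univ.erase a) := by
        rw [← hxa, ← image_insert, insert_erase hx]
      by_cases hcx : c x = a
      · exact hc (by rw [himage, hcx, insert_erase (mem_univ a)])
      · exact hta (by rw [himage, insert_eq_of_mem (mem_erase.2 ⟨hcx, mem_univ _⟩)])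

variable [Fintype T]

lemma sum_ncard_extensions_eq_sum_card_filter [DecidablePred (Undominated r)] (c : T → ι) (a : ι) :
    ∑ s with Undominated r s ∧ #s + 1 = Fintype.card ι ∧ s.image c = univ.erase a,
        (extensions r s).ncard =
      ∑ t with Undominated r t ∧ #t = Fintype.card ι,
        #{x ∈ t | (t.erase x).image c = univ.erase a} := by
  have hext : ∀ s, (extensions r s).ncard = #{x | x ∉ s ∧ Undominated r (insert x s)} := fun s => by
    rw [← Set.ncard_coe_finset]
    simp [extensions]
  simp_rw [hext, ← card_sigma]
  refine card_nbij' (fun p => ⟨insert p.2 p.1, p.2⟩) (fun p => ⟨p.1.erase p.2, p.2⟩) ?_ ?_ ?_ ?_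
  all_goals
    rintro ⟨s, x⟩ h
    simp only [coe_sigma, Set.mem_sigma_iff, coe_filter, mem_univ, true_and,
      Set.mem_ofPred_eq] at h ⊢
  · obtain ⟨⟨-, hcard, hsc⟩, hx, hu⟩ := h
    exact ⟨⟨hu, by rw [card_insert_of_notMem hx, hcard]⟩, mem_insert_self x s,
      by rw [erase_insert hx, hsc]⟩
  · obtain ⟨⟨hu, hcard⟩, hx, hsc⟩ := h
    exact ⟨⟨hu.mono (erase_subset x s), by rw [card_erase_add_one hx, hcard], hsc⟩,
      notMem_erase x s, by rwa [insert_erase hx]⟩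
  · rw [erase_insert h.2.1]
  · rw [insert_erase h.2.1]

end Slack

lemma IsSlack.exists_undominated_image_eq_univ {ι T α : Type*} [LinearOrder α] [Fintype ι]
    [DecidableEq ι] [Nonempty ι] [Finite T] {r : ι → T → α} {e : ι → T} (he : IsSlack r e)
    (hr : ∀ i, Function.Injective (r i)) {c : T → ι} (hc : Function.LeftInverse c e) :
    ∃ t, Undominated r t ∧ t.image c = univ := by
  classical
  have := Fintype.ofFinite T
  by_contra! hcon
  obtain ⟨a⟩ := ‹Nonempty ι›
  set doors : Finset (Finset T) :=
    {s | Undominated r s ∧ #s + 1 = Fintype.card ι ∧ s.image c = univ.erase a}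
  set s₀ : Finset T := (univ.erase a).image e with hs₀
  have hs₀c : s₀.image c = univ.erase a := by rw [hs₀, image_image, hc.comp_eq_id, image_id]
  have hs₀card : #s₀ + 1 = Fintype.card ι := by
    rw [hs₀, card_image_of_injective _ hc.injective, card_erase_add_one (mem_univ a), card_univ]
  have hs₀mem : s₀ ∈ doors :=
    mem_filter.2 ⟨mem_univ _, he.undominated_image_erase a, hs₀card, hs₀c⟩
  have heven : Even (∑ s ∈ doors, (extensions r s).ncard) := by
    rw [sum_ncard_extensions_eq_sum_card_filter]
    exact even_sum _ fun t ht =>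
      even_card_filter_image_erase (mem_filter.1 ht).2.2 (hcon t (mem_filter.1 ht).2.1) a
  have htwo : ∀ s ∈ doors.erase s₀, (extensions r s).ncard = 2 := fun s hs => by
    obtain ⟨hne, hs⟩ := mem_erase.1 hs
    obtain ⟨-, hu, hcard, hsc⟩ := mem_filter.1 hs
    obtain ⟨x, hx, hxe⟩ : ∃ x ∈ s, x ∉ Set.range e := by
      by_contra! hslack
      refine hne (eq_of_subset_of_card_le (fun x hx => ?_) (by lia))
      obtain ⟨i, rfl⟩ := hslack x hx
      exact mem_image_of_mem e (hsc ▸ hc i ▸ mem_image_of_mem c hx)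
    exact he.ncard_extensions_eq_two hr hu hcard hx hxe
  rw [← add_sum_erase _ _ hs₀mem, he.ncard_extensions_image_erase hr hc.injective,
    sum_congr rfl htwo, sum_const, smul_eq_mul] at heven
  grind

section NoBullying

variable {T α : Type*} [Finite T]

/-- The rankings `r` of `T`, with a slack point added for each of them. Ties are broken by an
enumeration, so that the rankings become injective. -/
noncomputable def slackRank (r : T → T → α) (i : T) (x : T ⊕ T) :
    WithBot (WithTop α) ×ₗ Fin (Nat.card (T ⊕ T)) :=
  open Classical in
  toLex (Sum.elim (fun x => ((r i x : WithTop α) : WithBot (WithTop α)))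
    (fun j => if j = i then ⊥ else ((⊤ : WithTop α) : WithBot (WithTop α))) x, Finite.equivFin _ x)

lemma slackRank_injective (r : T → T → α) (i : T) :
    Function.Injective (slackRank r i) := fun _ _ h =>
  (Finite.equivFin (T ⊕ T)).injective (congrArg (fun z => (ofLex z).2) h)

variable [LinearOrder α]

lemma isSlack_slackRank (r : T → T → α) : IsSlack (slackRank r) Sum.inr where
  le i y := by
    by_cases hy : y = Sum.inr i
    · rw [hy]
    · refine (Prod.Lex.toLex_lt_toLex.2 (Or.inl ?_)).le
      rcases y with x | j
      · simp
      · have : j ≠ i := fun h => hy (h ▸ rfl)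
        simp [this]
  lt i j y hij hy := by
    rcases y with x | k
    · refine Prod.Lex.toLex_lt_toLex.2 (Or.inl ?_)
      simpa [hij.symm] using WithBot.coe_lt_coe.2 (WithTop.coe_lt_top (r i x))
    · exact absurd ⟨k, rfl⟩ hy

/-- The no-bullying lemma of Petri and Voorneveld. -/
theorem exists_finset_forall_exists_forall_le [Nonempty T] (r : T → T → α) :
    ∃ s : Finset T, ∀ y, ∃ z ∈ s, ∀ x ∈ s, r z y ≤ r z x := by
  classical
  have := Fintype.ofFinite T
  obtain ⟨t, ht, hc⟩ := (isSlack_slackRank r).exists_undominated_image_eq_univ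
    (slackRank_injective r) (c := Sum.elim id id) fun _ => rfl
  refine ⟨t.toLeft, fun y => ?_⟩
  obtain ⟨i, hi⟩ := ht (Sum.inl y)
  have hle : ∀ x ∈ t, (ofLex (slackRank r i (Sum.inl y))).1 ≤ (ofLex (slackRank r i x)).1 :=
    fun x hx => Prod.Lex.monotone_fst _ _ (hi x hx)
  obtain ⟨x, hx, rfl⟩ := mem_image.1 (hc.symm ▸ mem_univ i)
  rcases x with z | z
  · refine ⟨z, mem_toLeft.2 hx, fun x hx => ?_⟩
    simpa [slackRank] using hle _ (mem_toLeft.1 hx)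
  · simpa [slackRank] using hle _ hx

end NoBullying

section Simplex

/-- The points of the simplex with denominator `N`, encoded by their numerators. -/
abbrev GridPoint (ι : Type*) [Fintype ι] (N : ℕ) : Type _ :=
  {x : ι → ℕ // ∑ i, x i = N}

variable {ι : Type*} [Fintype ι]

lemma exists_le_sum_eq {m : ι → ℕ} {N : ℕ} (h : N ≤ ∑ i, m i) : ∃ y ≤ m, ∑ i, y i = N := by
  classical
  induction N with
  | zero => exact ⟨0, fun i => Nat.zero_le _, by simp⟩
  | succ N ih =>
    obtain ⟨y, hy, hsum⟩ := ih (by lia)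
    obtain ⟨k, -, hk⟩ := exists_lt_of_sum_lt (by lia : ∑ i, y i < ∑ i, m i)
    refine ⟨y + Pi.single k 1, fun i => ?_, by simp [sum_add_distrib, hsum]⟩
    rcases eq_or_ne i k with rfl | hik
    · simpa using hk
    · simpa [hik] using hy i

lemma exists_finset_sum_sup_lt [Nonempty ι] {N : ℕ} {c : GridPoint ι N → ι}
    (hc : ∀ x : GridPoint ι N, x.1 (c x) ≠ 0) :
    ∃ s : Finset (GridPoint ι N), (∀ i, ∃ z ∈ s, c z = i) ∧
      ∑ i, s.sup (fun x => x.1 i) < N + Fintype.card ι := by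
  classical
  have : Finite (GridPoint ι N) := (finite_toSet (piAntidiag univ N)).subset
    fun x hx => mem_coe.2 (mem_piAntidiag.2 ⟨hx, fun i _ => mem_univ i⟩)
  have : Nonempty (GridPoint ι N) := ⟨Pi.single (Classical.arbitrary ι) N, by simp⟩
  obtain ⟨s, hs⟩ := exists_finset_forall_exists_forall_le
    fun z x : GridPoint ι N => OrderDual.toDual (x.1 (c z))
  have hcol : ∀ i, ∃ z ∈ s, c z = i := fun i => by
    obtain ⟨z, hz, hle⟩ := hs ⟨Pi.single i N, by simp⟩
    refine ⟨z, hz, ?_⟩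
    by_contra hzi
    have hle0 : z.1 (c z) ≤ Pi.single (M := fun _ => ℕ) i N (c z) := hle z hz
    rw [Pi.single_eq_of_ne hzi] at hle0
    exact hc z (Nat.le_zero.1 hle0)
  refine ⟨s, hcol, ?_⟩
  set m : ι → ℕ := fun i => s.sup fun x => x.1 i
  have hpos : ∀ i, 1 ≤ m i := fun i => by
    obtain ⟨z, hz, rfl⟩ := hcol i
    exact (Nat.one_le_iff_ne_zero.2 (hc z)).trans
      (le_sup (f := fun x : GridPoint ι N => x.1 (c z)) hz)
  by_contra! hge
  have hsum : ∑ i, (m i - 1) + Fintype.card ι = ∑ i, m i := by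
    rw [← card_univ, card_eq_sum_ones, ← sum_add_distrib]
    exact sum_congr rfl fun i _ => Nat.sub_add_cancel (hpos i)
  obtain ⟨y, hym, hy⟩ := exists_le_sum_eq (by lia : N ≤ ∑ i, (m i - 1))
  obtain ⟨z, -, hz⟩ := hs ⟨y, hy⟩
  have hmy : m (c z) ≤ y (c z) := Finset.sup_le hz
  exact ((hmy.trans (hym (c z))).trans_lt (Nat.sub_one_lt_of_lt (hpos (c z)))).false

/-- A form of Sperner's lemma, on the grid points of the simplex instead of a triangulation. -/
theorem exists_forall_lt_add_card [Nonempty ι] {N : ℕ} {c : GridPoint ι N → ι}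
    (hc : ∀ x : GridPoint ι N, x.1 (c x) ≠ 0) :
    ∃ σ : ι → GridPoint ι N, (∀ i, c (σ i) = i) ∧
      ∀ i j k, (σ i).1 k < (σ j).1 k + Fintype.card ι := by
  classical
  obtain ⟨s, hcol, hsum⟩ := exists_finset_sum_sup_lt hc
  choose σ hσs hσc using hcol
  refine ⟨σ, hσc, fun i j k => ?_⟩
  set m : ι → ℕ := fun i => s.sup fun x => x.1 i
  have hle : ∀ i l, (σ i).1 l ≤ m l := fun i l =>
    le_sup (f := fun x : GridPoint ι N => x.1 l) (hσs i)
  refine lt_of_add_lt_add_right (a := ∑ l ∈ univ.erase k, (σ j).1 l) ?_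
  calc
    (σ i).1 k + ∑ l ∈ univ.erase k, (σ j).1 l ≤ m k + ∑ l ∈ univ.erase k, m l :=
      add_le_add (hle i k) (sum_le_sum fun l _ => hle j l)
    _ = ∑ l, m l := add_sum_erase _ _ (mem_univ k)
    _ < N + Fintype.card ι := hsum
    _ = (σ j).1 k + Fintype.card ι + ∑ l ∈ univ.erase k, (σ j).1 l := by
      rw [add_right_comm, add_sum_erase _ _ (mem_univ k), (σ j).2]

lemma natCast_div_mem_stdSimplex {N : ℕ} (hN : N ≠ 0) {x : ι → ℕ} (hx : ∑ i, x i = N) :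
    (fun i => (x i / N : ℝ)) ∈ stdSimplex ℝ ι := by
  refine ⟨fun i => by positivity, ?_⟩
  rw [← sum_div, ← Nat.cast_sum, hx, div_self (Nat.cast_ne_zero.2 hN)]

lemma natCast_div_sub_div_lt {a b m N : ℕ} {δ : ℝ} (hN : 0 < N) (hδ : 0 < δ) (hm : m / δ < N)
    (h : a < b + m) : (a / N - b / N : ℝ) < δ := by
  rw [← sub_div, div_lt_iff₀ (Nat.cast_pos.2 hN)]
  rw [div_lt_iff₀ hδ] at hm
  have : (a : ℝ) < b + m := mod_cast h
  linarith

/-- The Knaster–Kuratowski–Mazurkiewicz lemma. -/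
theorem nonempty_iInter_of_forall_exists_mem [Nonempty ι] {F : ι → Set (stdSimplex ℝ ι)}
    (hF : ∀ i, IsClosed (F i)) (hcov : ∀ x, ∃ i, x i ≠ 0 ∧ x ∈ F i) : (⋂ i, F i).Nonempty := by
  by_contra! hempty
  obtain ⟨δ, hδ, hball⟩ := lebesgue_number_lemma_of_metric (isCompact_univ (X := stdSimplex ℝ ι))
    (fun i => (hF i).isOpen_compl) (by rw [← Set.compl_iInter, hempty, Set.compl_empty])
  obtain ⟨N, hN⟩ := exists_nat_gt (Fintype.card ι / δ)
  have hN0 : 0 < N := Nat.cast_pos.1 (lt_of_le_of_lt (by positivity) hN)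
  let p : GridPoint ι N → stdSimplex ℝ ι :=
    fun x => ⟨fun i => x.1 i / N, natCast_div_mem_stdSimplex hN0.ne' x.2⟩
  choose c hc hcF using fun x => hcov (p x)
  obtain ⟨σ, hσc, hσ⟩ := exists_forall_lt_add_card (c := c) fun x hx => hc x <| by
    change (x.1 (c x) / N : ℝ) = 0
    rw [hx, Nat.cast_zero, zero_div]
  have hdist : ∀ i j, dist (p (σ i)) (p (σ j)) < δ := fun i j =>
    (dist_pi_lt_iff hδ).2 fun k => abs_sub_lt_iff.2
      ⟨natCast_div_sub_div_lt hN0 hδ hN (hσ i j k), natCast_div_sub_div_lt hN0 hδ hN (hσ j i k)⟩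
  obtain ⟨i, hi⟩ := hball (p (σ (Classical.arbitrary ι))) (Set.mem_univ _)
  exact hi (Metric.mem_ball.2 (hdist i _)) (by simpa only [hσc] using hcF (σ i))

lemma exists_nonneg_of_sum_mul_nonneg [Nonempty ι] {w : (ι → ℝ) → ι → ℝ}
    (hw : ContinuousOn w (stdSimplex ℝ ι)) (hsum : ∀ l ∈ stdSimplex ℝ ι, 0 ≤ ∑ i, l i * w l i) :
    ∃ l ∈ stdSimplex ℝ ι, 0 ≤ w l := by
  obtain ⟨l, hl⟩ := nonempty_iInter_of_forall_exists_mem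
    (F := fun i => {l : stdSimplex ℝ ι | 0 ≤ w l i})
    (fun i => isClosed_le continuous_const ((continuous_apply i).comp hw.domRestrict))
    (fun l => by
      by_contra! hneg
      obtain ⟨k, -, hk⟩ := exists_ne_zero_of_sum_ne_zero (l.2.2.trans_ne one_ne_zero)
      have hlw : ∀ i, l i ≠ 0 → l i * w l i < 0 := fun i hi =>
        mul_neg_of_pos_of_neg ((l.2.1 i).lt_of_ne' hi) (not_le.1 (hneg i hi))
      refine (hsum l l.2).not_gt (sum_neg' (fun i _ => ?_) ⟨k, mem_univ k, hlw k hk⟩)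
      by_cases hi : l i = 0
      · rw [hi, zero_mul]
      · exact (hlw i hi).le)
  exact ⟨l, l.2, fun i => Set.mem_iInter.1 hl i⟩

theorem stmt0_general [Nonempty ι] (d : ι → ℝ) {v : (ι → ℝ) → ι → ℝ}
    (hv : ContinuousOn v (stdSimplex ℝ ι))
    (h1 : ∀ l ∈ stdSimplex ℝ ι, ∑ i, l i * v l i = ∑ i, l i * d i)
    (h2 : ∀ k, ∀ l ∈ stdSimplex ℝ ι, l k = 0 → v l k ≤ d k) :
    ∃ l ∈ stdSimplex ℝ ι, v l = d := by
  have hsum : ∀ l ∈ stdSimplex ℝ ι, ∑ i, l i * (v l - d) i = 0 := fun l hl => by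
    simp_rw [Pi.sub_apply, mul_sub]
    rw [sum_sub_distrib, h1 l hl, sub_self]
  obtain ⟨l, hl, hnonneg⟩ := exists_nonneg_of_sum_mul_nonneg (hv.sub continuousOn_const)
    fun l hl => (hsum l hl).ge
  refine ⟨l, hl, funext fun k => ?_⟩
  have hk : l k * (v l - d) k = 0 := (sum_eq_zero_iff_of_nonneg fun i _ =>
    mul_nonneg (hl.1 i) (hnonneg i)).1 (hsum l hl) k (mem_univ k)
  rcases mul_eq_zero.1 hk with hlk | hvk
  · exact (h2 k l hl hlk).antisymm (sub_nonneg.1 (hnonneg k))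
  · exact sub_eq_zero.1 hvk

end Simplex

theorem stmt0 (n : ℕ) (hn : 1 ≤ n) (d : Fin n → ℝ) (v : (Fin n → ℝ) → Fin n → ℝ)
    (hv : ContinuousOn v (stdSimplex ℝ (Fin n)))
    (K₁ K₂ : Finset (Fin n)) (hpart : ∀ k, k ∈ K₁ ↔ k ∉ K₂)
    (h1 : ∀ l ∈ stdSimplex ℝ (Fin n), ∑ i, l i * v l i = ∑ i, l i * d i)
    (h2 : ∀ k ∈ K₁, ∀ l ∈ stdSimplex ℝ (Fin n), l k = 0 → v l k < d k)
    (h3 : ∀ k ∈ K₂, ∀ l ∈ stdSimplex ℝ (Fin n), v l k ≤ d k) :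
    ∃ l ∈ stdSimplex ℝ (Fin n), v l = d := by
  have : Nonempty (Fin n) := ⟨⟨0, hn⟩⟩
  exact stmt0_general d hv h1 fun k l hl hlk =>
    if hk : k ∈ K₂ then h3 k hk l hl else (h2 k ((hpart k).2 hk) l hl hlk).le
end

section
/- Let v : Δ_{n+1} → ℝ^{n+1} be continuous, d ∈ ℝ^{n+1}, and suppose v_{n+1}(λ) < d_{n+1} for all λ ∈ Δ_{n+1} with λ_{n+1} = 0, while v_{n+1}(λ) ≥ d_{n+1} for all λ ∈ Δ_{n+1} in some ε-neighborhood of the vertex e_{n+1} (for some ε > 0). For t ∈ Δₙ define β(t) = inf { b ∈ [0,1] : ∀ γ ∈ [b,1], v_{n+1}(γt₁, …, γtₙ, 1−γ) < d_{n+1} }. Then for every t ∈ Δₙ, β(t) ≥ ε/√2 > 0 and v_{n+1}(β(t)t₁, …, β(t)tₙ, 1−β(t)) = d_{n+1}. -/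
/-!
Along a segment ending below the level `c`, the infimum of the parameters after which the function
stays below `c` is the last parameter at which it is at least `c`; this maximum exists by
compactness, and the value there is exactly `c` by the intermediate value theorem. The point
`(γ t, 1 - γ)` lies at Euclidean distance `γ √(1 + ‖t‖²) ≤ γ √2` from the vertex, so the function is
still at least `c` for every `γ < ε / √2`.
-/

open Set

section HittingLevel

variable {X α : Type*}

/-- The hitting level of `c` by `f` on `[a, b]`: the infimum of the points of `[a, b]` from which
on `f` stays below `c` up to `b`. It is a junk value unless `a ≤ b` and `f b < c`. -/
def hittingLevel [Preorder X] [InfSet X] [LT α] (f : X → α) (a b : X) (c : α) : X :=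
  sInf {x | x ∈ Icc a b ∧ ∀ y ∈ Icc x b, f y < c}

variable [LinearOrder α] {f : X → α} {a b m : X} {c : α}

theorem setOf_forall_Icc_lt_eq_Ioc [LinearOrder X]
    (hm : IsGreatest {y ∈ Icc a b | c ≤ f y} m) :
    {x | x ∈ Icc a b ∧ ∀ y ∈ Icc x b, f y < c} = Ioc m b := by
  obtain ⟨⟨⟨ham, hmb⟩, hcm⟩, hmax⟩ := hm
  ext x
  constructor
  · rintro ⟨⟨-, hxb⟩, hx⟩
    exact ⟨lt_of_not_ge fun hxm => hcm.not_gt (hx m ⟨hxm, hmb⟩), hxb⟩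
  · rintro ⟨hmx, hxb⟩
    have hax : a ≤ x := ham.trans hmx.le
    exact ⟨⟨hax, hxb⟩, fun y ⟨hxy, hyb⟩ => lt_of_not_ge fun hcy =>
      (hmx.trans_le hxy).not_ge (hmax ⟨⟨hax.trans hxy, hyb⟩, hcy⟩)⟩

variable [ConditionallyCompleteLinearOrder X]

theorem le_hittingLevel {δ : X} (hab : a ≤ b) (hb : f b < c)
    (hδ : ∀ y ∈ Icc a b, y < δ → c ≤ f y) : δ ≤ hittingLevel f a b c := by
  refine le_csInf ⟨b, right_mem_Icc.2 hab, by simpa using hb⟩ fun x ⟨hx, hlt⟩ => ?_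
  exact le_of_not_gt fun hxδ => (hlt x (left_mem_Icc.2 hx.2)).not_ge (hδ x hx hxδ)

variable [DenselyOrdered X]

theorem hittingLevel_eq_of_isGreatest (hm : IsGreatest {y ∈ Icc a b | c ≤ f y} m)
    (hb : f b < c) : hittingLevel f a b c = m := by
  have hmb : m < b := hm.1.1.2.lt_of_ne fun h => hb.not_ge (h ▸ hm.1.2)
  rw [hittingLevel, setOf_forall_Icc_lt_eq_Ioc hm, csInf_Ioc hmb]

variable [TopologicalSpace X] [OrderTopology X] [TopologicalSpace α] [OrderClosedTopology α]

theorem apply_eq_of_isGreatest (hf : ContinuousOn f (Icc a b))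
    (hm : IsGreatest {y ∈ Icc a b | c ≤ f y} m) (hb : f b ≤ c) : f m = c := by
  obtain ⟨⟨⟨ham, hmb⟩, hcm⟩, hmax⟩ := hm
  obtain ⟨x, ⟨hmx, hxb⟩, hxc⟩ :=
    intermediate_value_Icc' hmb (hf.mono (Icc_subset_Icc_left ham)) ⟨hb, hcm⟩
  have hxm : x ≤ m := hmax ⟨⟨ham.trans hmx, hxb⟩, hxc.ge⟩
  rwa [hxm.antisymm hmx] at hxc

theorem apply_hittingLevel (hf : ContinuousOn f (Icc a b)) (hab : a ≤ b) (ha : c ≤ f a)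
    (hb : f b < c) : f (hittingLevel f a b c) = c := by
  have hclosed : IsClosed {y ∈ Icc a b | c ≤ f y} :=
    hf.preimage_isClosed_of_isClosed isClosed_Icc isClosed_Ici
  have hcompact : IsCompact {y ∈ Icc a b | c ≤ f y} :=
    isCompact_Icc.of_isClosed_subset hclosed (sep_subset _ _)
  obtain ⟨m, hm⟩ := hcompact.exists_isGreatest ⟨a, left_mem_Icc.2 hab, ha⟩
  rw [hittingLevel_eq_of_isGreatest hm hb]
  exact apply_eq_of_isGreatest hf hm hb.le

end HittingLevel

section ApexSegment

variable {R : Type*} {n : ℕ}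

/-- The point of parameter `γ` on the segment from the last vertex (`γ = 0`) to the point `t` of
the opposite facet (`γ = 1`). -/
def apexSegment [Ring R] (t : Fin n → R) (γ : R) : Fin (n + 1) → R :=
  Fin.snoc (fun i => γ * t i) (1 - γ)

theorem continuous_apexSegment [Ring R] [TopologicalSpace R] [IsTopologicalRing R]
    (t : Fin n → R) : Continuous (apexSegment t) :=
  Continuous.finSnoc (by fun_prop) (by fun_prop)

theorem apexSegment_mem_stdSimplex [Ring R] [PartialOrder R] [IsOrderedRing R] {t : Fin n → R}
    {γ : R} (ht : t ∈ stdSimplex R (Fin n)) (hγ : γ ∈ Icc 0 1) :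
    apexSegment t γ ∈ stdSimplex R (Fin (n + 1)) := by
  refine ⟨fun i => ?_, ?_⟩
  · induction i using Fin.lastCases with
    | last => simpa [apexSegment] using hγ.2
    | cast i => simpa [apexSegment] using mul_nonneg hγ.1 (ht.1 i)
  · simp [apexSegment, Fin.sum_univ_castSucc, ← Finset.mul_sum, ht.2]

theorem sum_sq_apexSegment_sub_vertex [CommRing R] (t : Fin n → R) (γ : R) :
    ∑ i, (apexSegment t γ i - if i = Fin.last n then 1 else 0) ^ 2 =
      γ ^ 2 * (1 + ∑ i, t i ^ 2) := by
  simp only [apexSegment, Fin.sum_univ_castSucc, Fin.snoc_castSucc, Fin.snoc_last,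
    Fin.castSucc_ne_last, if_false, if_true, sub_zero, mul_pow, ← Finset.mul_sum]
  ring

theorem sum_sq_le_one_of_mem_stdSimplex [Semiring R] [PartialOrder R] [IsOrderedRing R]
    {ι : Type*} [Fintype ι] {x : ι → R} (hx : x ∈ stdSimplex R ι) : ∑ i, x i ^ 2 ≤ 1 :=
  calc ∑ i, x i ^ 2 ≤ (∑ i, x i) ^ 2 := Finset.sum_sq_le_sq_sum_of_nonneg fun i _ => hx.1 i
    _ = 1 := by rw [hx.2, one_pow]

theorem sqrt_sum_sq_apexSegment_sub_vertex_le {t : Fin n → ℝ} {γ : ℝ}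
    (ht : t ∈ stdSimplex ℝ (Fin n)) (hγ : 0 ≤ γ) :
    √(∑ i, (apexSegment t γ i - if i = Fin.last n then 1 else 0) ^ 2) ≤ γ * √2 := by
  rw [sum_sq_apexSegment_sub_vertex, Real.sqrt_mul (sq_nonneg γ), Real.sqrt_sq hγ]
  gcongr
  linarith [sum_sq_le_one_of_mem_stdSimplex ht]

end ApexSegment

theorem stmt4_general {α : Type*} [LinearOrder α] [TopologicalSpace α] [OrderClosedTopology α]
    {n : ℕ} {g : (Fin (n + 1) → ℝ) → α} {c : α} {ε : ℝ} {t : Fin n → ℝ}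
    (hg : ContinuousOn g (stdSimplex ℝ (Fin (n + 1)))) (hε : 0 < ε)
    (hfacet : ∀ l ∈ stdSimplex ℝ (Fin (n + 1)), l (Fin.last n) = 0 → g l < c)
    (hnbhd : ∀ l ∈ stdSimplex ℝ (Fin (n + 1)),
      √(∑ i, (l i - if i = Fin.last n then 1 else 0) ^ 2) < ε → c ≤ g l)
    (ht : t ∈ stdSimplex ℝ (Fin n)) :
    ε / √2 ≤ hittingLevel (fun γ => g (apexSegment t γ)) 0 1 c ∧
      g (apexSegment t (hittingLevel (fun γ => g (apexSegment t γ)) 0 1 c)) = c := by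
  have hcont : ContinuousOn (fun γ => g (apexSegment t γ)) (Icc 0 1) :=
    hg.comp (continuous_apexSegment t).continuousOn fun _ => apexSegment_mem_stdSimplex ht
  have hnear : ∀ γ ∈ Icc (0 : ℝ) 1, γ * √2 < ε → c ≤ g (apexSegment t γ) := fun γ hγ hγε =>
    hnbhd _ (apexSegment_mem_stdSimplex ht hγ)
      ((sqrt_sum_sq_apexSegment_sub_vertex_le ht hγ.1).trans_lt hγε)
  have hstart : c ≤ g (apexSegment t 0) := hnear 0 (by simp) (by simpa using hε)
  have hend : g (apexSegment t 1) < c :=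
    hfacet _ (apexSegment_mem_stdSimplex ht (by simp)) (by simp [apexSegment])
  exact ⟨le_hittingLevel zero_le_one hend fun γ hγ hγε =>
      hnear γ hγ ((lt_div_iff₀ (by positivity)).1 hγε),
    apply_hittingLevel hcont zero_le_one hstart hend⟩

theorem stmt4 (n : ℕ) (v : (Fin (n + 1) → ℝ) → Fin (n + 1) → ℝ) (d : Fin (n + 1) → ℝ)
    (hv : ContinuousOn v (stdSimplex ℝ (Fin (n + 1))))
    (ε : ℝ) (hε : 0 < ε)
    (hfacet : ∀ l ∈ stdSimplex ℝ (Fin (n + 1)), l (Fin.last n) = 0 →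
      v l (Fin.last n) < d (Fin.last n))
    (hnbhd : ∀ l ∈ stdSimplex ℝ (Fin (n + 1)),
      Real.sqrt (∑ i, (l i - (if i = Fin.last n then (1 : ℝ) else 0)) ^ 2) < ε →
      d (Fin.last n) ≤ v l (Fin.last n)) :
    ∀ t ∈ stdSimplex ℝ (Fin n),
      ε / Real.sqrt 2 ≤
        sInf {b : ℝ | b ∈ Set.Icc (0 : ℝ) 1 ∧ ∀ γ ∈ Set.Icc b 1,
          v (Fin.snoc (fun i => γ * t i) (1 - γ)) (Fin.last n) < d (Fin.last n)} ∧
      v (Fin.snoc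
          (fun i => (sInf {b : ℝ | b ∈ Set.Icc (0 : ℝ) 1 ∧ ∀ γ ∈ Set.Icc b 1,
            v (Fin.snoc (fun i => γ * t i) (1 - γ)) (Fin.last n) < d (Fin.last n)}) * t i)
          (1 - sInf {b : ℝ | b ∈ Set.Icc (0 : ℝ) 1 ∧ ∀ γ ∈ Set.Icc b 1,
            v (Fin.snoc (fun i => γ * t i) (1 - γ)) (Fin.last n) < d (Fin.last n)}))
        (Fin.last n) = d (Fin.last n) :=
  fun _ => stmt4_general (continuousOn_pi.1 hv (Fin.last n)) hε hfacet hnbhd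
end
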